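/- arXiv:2512.06872 — 5 statements merged into one kernel-verified Lean document; each statement's English description precedes it below -/
import Mathlib

section
/- Let σ_{Y,0}, σ_{Y,1} > 0 and ρ₀, ρ₁ ∈ [−1,1], and set σ_z = √(1−ρ_z²)·σ_{Y,z} for z ∈ {0,1}. Then the efficiency gain from incorporating surrogates satisfies the identity (σ_{Y,0}+σ_{Y,1})² − (σ₀+σ₁)² − ρ₀²σ_{Y,0}² − ρ₁²σ_{Y,1}² = 2(1 − √(1−ρ₀²)·√(1−ρ₁²))·σ_{Y,0}·σ_{Y,1}, and this quantity is strictly positive if and only if ρ₀² + ρ₁² > 0. -/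
/-- Efficiency gain from incorporating surrogates: with σ_z = √(1−ρ_z²)·σ_{Y,z},
(σ_{Y,0}+σ_{Y,1})² − (σ₀+σ₁)² − ρ₀²σ_{Y,0}² − ρ₁²σ_{Y,1}²
  = 2(1 − √(1−ρ₀²)√(1−ρ₁²))σ_{Y,0}σ_{Y,1}, which is > 0 iff ρ₀² + ρ₁² > 0. -/
theorem stmt6 (σY0 σY1 ρ0 ρ1 : ℝ) (h0 : 0 < σY0) (h1 : 0 < σY1)
    (hρ0 : ρ0 ∈ Set.Icc (-1:ℝ) 1) (hρ1 : ρ1 ∈ Set.Icc (-1:ℝ) 1) :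
    ((σY0 + σY1)^2
        - (Real.sqrt (1 - ρ0^2) * σY0 + Real.sqrt (1 - ρ1^2) * σY1)^2
        - ρ0^2 * σY0^2 - ρ1^2 * σY1^2
      = 2 * (1 - Real.sqrt (1 - ρ0^2) * Real.sqrt (1 - ρ1^2)) * σY0 * σY1) ∧
    (0 < 2 * (1 - Real.sqrt (1 - ρ0^2) * Real.sqrt (1 - ρ1^2)) * σY0 * σY1
      ↔ 0 < ρ0^2 + ρ1^2) := by
  have ha : Real.sqrt (1 - ρ0^2) ^ 2 = 1 - ρ0^2 :=
    Real.sq_sqrt (by nlinarith [hρ0.1, hρ0.2])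
  have hb : Real.sqrt (1 - ρ1^2) ^ 2 = 1 - ρ1^2 :=
    Real.sq_sqrt (by nlinarith [hρ1.1, hρ1.2])
  refine ⟨by linear_combination (-σY0^2) * ha - σY1^2 * hb, fun h => ?_, fun h => ?_⟩
  · by_contra hn
    have e0 : ρ0 ^ 2 = 0 := by nlinarith [sq_nonneg ρ0, sq_nonneg ρ1]
    have e1 : ρ1 ^ 2 = 0 := by nlinarith [sq_nonneg ρ0, sq_nonneg ρ1]
    simp [e0, e1] at h
  · have hlt : 0 < 1 - Real.sqrt (1 - ρ0^2) * Real.sqrt (1 - ρ1^2) := by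
      nlinarith [two_mul_le_add_sq (Real.sqrt (1 - ρ0^2)) (Real.sqrt (1 - ρ1^2))]
    positivity
end

section
/- Let σ₀, σ₁ > 0, let π* = σ₁/(σ₀+σ₁), let π ∈ (0,1), and set ε = |π − π*|. If ε ≤ (σ₀ ∧ σ₁)/(2(σ₀+σ₁)), then σ₁²/π + σ₀²/(1−π) − σ₁²/π* − σ₀²/(1−π*) ≤ 2(σ₀+σ₁)⁴ ε² / (σ₀σ₁); equivalently, the excess of the design objective over its minimum is at most 2(σ₀+σ₁)² ε² / (π̲(1−π̲)), where π̲ = min(π*, 1−π*) and π̲(1−π̲) = σ₀σ₁/(σ₀+σ₁)². -/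
/-- The excess of the design objective over its minimum, in closed form. -/
lemma design_objective_excess {σ0 σ1 π : ℝ} (h0 : 0 < σ0) (h1 : 0 < σ1)
    (hπ : π ∈ Set.Ioo (0:ℝ) 1) :
    σ1^2 / π + σ0^2 / (1 - π)
        - σ1^2 / (σ1 / (σ0 + σ1)) - σ0^2 / (1 - σ1 / (σ0 + σ1))
      = (σ0 + σ1)^2 * (π - σ1 / (σ0 + σ1))^2 / (π * (1 - π)) := by
  have hS : σ0 + σ1 ≠ 0 := by positivity
  have hπ0 : π ≠ 0 := hπ.1.ne'
  have hπ1 : 1 - π ≠ 0 := (sub_pos.2 hπ.2).ne'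
  have hstar : 1 - σ1 / (σ0 + σ1) = σ0 / (σ0 + σ1) := by
    field_simp
    ring
  rw [hstar]
  field_simp
  ring

/-- Close to the Neyman allocation, `π (1 - π)` is at least half its value there. -/
lemma mul_le_two_mul_of_abs_sub_le {σ0 σ1 π : ℝ} (h0 : 0 < σ0) (h1 : 0 < σ1)
    (hε : |π - σ1 / (σ0 + σ1)| ≤ min σ0 σ1 / (2 * (σ0 + σ1))) :
    σ0 * σ1 ≤ 2 * (σ0 + σ1)^2 * (π * (1 - π)) := by
  have hS : 0 < σ0 + σ1 := by positivity
  obtain ⟨x, rfl⟩ : ∃ x, π = x / (σ0 + σ1) := ⟨π * (σ0 + σ1), by field_simp⟩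
  have hx : |x - σ1| ≤ min σ0 σ1 / 2 := by
    rw [← sub_div, abs_div, abs_of_pos hS, ← div_div, div_le_div_iff_of_pos_right hS] at hε
    exact hε
  have hrw : 2 * (σ0 + σ1)^2 * (x / (σ0 + σ1) * (1 - x / (σ0 + σ1)))
      = 2 * (x * (σ0 + σ1 - x)) := by
    field_simp
  rw [hrw]
  obtain ⟨hlo, hhi⟩ := abs_le.1 hx
  rcases le_total σ0 σ1 with h | h
  · rw [min_eq_left h] at hlo hhi
    nlinarith [mul_nonneg (sub_nonneg.2 hlo) (sub_nonneg.2 hhi),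
      mul_nonneg h0.le (sub_nonneg.2 h), mul_nonneg h0.le (sub_nonneg.2 hlo),
      mul_nonneg (sub_nonneg.2 h) (sub_nonneg.2 hhi)]
  · rw [min_eq_right h] at hlo hhi
    nlinarith [mul_nonneg (sub_nonneg.2 hlo) (sub_nonneg.2 hhi),
      mul_nonneg h1.le (sub_nonneg.2 h), mul_nonneg h1.le (sub_nonneg.2 hlo),
      mul_nonneg (sub_nonneg.2 h) (sub_nonneg.2 hlo)]

/-- Quadratic local-growth bound for the design objective around the Neyman
allocation π* = σ₁/(σ₀+σ₁): if ε = |π − π*| ≤ (σ₀ ∧ σ₁)/(2(σ₀+σ₁)), then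
σ₁²/π + σ₀²/(1−π) − σ₁²/π* − σ₀²/(1−π*) ≤ 2(σ₀+σ₁)⁴ε²/(σ₀σ₁). -/
theorem stmt9 (σ0 σ1 π : ℝ) (h0 : 0 < σ0) (h1 : 0 < σ1)
    (hπ : π ∈ Set.Ioo (0:ℝ) 1)
    (hε : |π - σ1 / (σ0 + σ1)| ≤ min σ0 σ1 / (2 * (σ0 + σ1))) :
    σ1^2 / π + σ0^2 / (1 - π)
        - σ1^2 / (σ1 / (σ0 + σ1)) - σ0^2 / (1 - σ1 / (σ0 + σ1))
      ≤ 2 * (σ0 + σ1)^4 * |π - σ1 / (σ0 + σ1)|^2 / (σ0 * σ1) := by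
  rw [design_objective_excess h0 h1 hπ, sq_abs,
    div_le_div_iff₀ (mul_pos hπ.1 (sub_pos.2 hπ.2)) (mul_pos h0 h1)]
  calc (σ0 + σ1)^2 * (π - σ1 / (σ0 + σ1))^2 * (σ0 * σ1)
      ≤ (σ0 + σ1)^2 * (π - σ1 / (σ0 + σ1))^2 * (2 * (σ0 + σ1)^2 * (π * (1 - π))) :=
        mul_le_mul_of_nonneg_left (mul_le_two_mul_of_abs_sub_le h0 h1 hε) (by positivity)
    _ = 2 * (σ0 + σ1)^4 * (π - σ1 / (σ0 + σ1))^2 * (π * (1 - π)) := by ring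
end

section
/- Let 0 < σ₁ ≤ σ₀ and set π̲ = σ₁/(σ₀+σ₁) (so π̲ = min(π*, 1−π*) for π* = σ₁/(σ₀+σ₁)). Suppose σ̂₀, σ̂₁ are real numbers with |σ̂₁ − σ₁| ≤ e₁ and |σ̂₀ − σ₀| ≤ e₀ for some errors satisfying 0 ≤ e₀ ≤ e₁ ≤ σ₁/2. Then the plug-in allocation π̃ = σ̂₁/(σ̂₀+σ̂₁) satisfies π̲/2 ≤ π̃ ≤ 1 − π̲/2. -/
/-- Deterministic clipping-free bound for the plug-in Neyman allocation: if
0 < σ₁ ≤ σ₀, π̲ = σ₁/(σ₀+σ₁), and |σ̂₁−σ₁| ≤ e₁, |σ̂₀−σ₀| ≤ e₀ with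
0 ≤ e₀ ≤ e₁ ≤ σ₁/2, then π̲/2 ≤ σ̂₁/(σ̂₀+σ̂₁) ≤ 1 − π̲/2. -/
theorem stmt10 (σ0 σ1 σh0 σh1 e0 e1 : ℝ)
    (h1 : 0 < σ1) (h01 : σ1 ≤ σ0)
    (he1 : |σh1 - σ1| ≤ e1) (he0 : |σh0 - σ0| ≤ e0)
    (h0e : 0 ≤ e0) (hee : e0 ≤ e1) (he : e1 ≤ σ1 / 2) :
    σ1 / (σ0 + σ1) / 2 ≤ σh1 / (σh0 + σh1) ∧
    σh1 / (σh0 + σh1) ≤ 1 - σ1 / (σ0 + σ1) / 2 := by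
  obtain ⟨h1l, h1u⟩ := abs_le.mp he1
  obtain ⟨h0l, h0u⟩ := abs_le.mp he0
  have hs : 0 < σ0 + σ1 := by linarith
  have ht : 0 < σh0 + σh1 := by linarith
  constructor
  · rw [div_div, div_le_div_iff₀ (by positivity) ht]
    have hσ0 : 0 ≤ (σ0 + σ1 / 2 - σh0) * σ1 := mul_nonneg (by linarith) h1.le
    have hσ1 : 0 ≤ (σh1 - σ1 / 2) * (2 * σ0 + σ1) := mul_nonneg (by linarith) (by linarith)
    linarith
  · have hcompl : σh1 / (σh0 + σh1) = 1 - σh0 / (σh0 + σh1) := by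
      field_simp
      ring
    rw [hcompl, div_div]
    refine sub_le_sub_left ?_ 1
    rw [div_le_div_iff₀ (by positivity) ht]
    have hσ1 : 0 ≤ (3 * σ1 / 2 - σh1) * σ1 := mul_nonneg (by linarith) h1.le
    have hσ0 : 0 ≤ (σh0 - σ1 / 2) * (2 * σ0 + σ1) := mul_nonneg (by linarith) (by linarith)
    have hσ : 0 ≤ (σ0 - σ1) * σ1 := mul_nonneg (by linarith) h1.le
    linarith
end

section
/- Let σ₀, σ₁ > 0 and let σ̂₀, σ̂₁ be real numbers with |σ̂_z − σ_z| ≤ e_z and 0 ≤ e_z ≤ σ_z/2 for z ∈ {0,1}. Then the plug-in allocation π̃ = σ̂₁/(σ̂₀+σ̂₁) and the oracle allocation π* = σ₁/(σ₀+σ₁) satisfy |π̃ − π*| ≤ 2(σ₁ e₀ + σ₀ e₁)/(σ₀+σ₁)². -/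
/-- Deterministic rate bound for the plug-in Neyman allocation: if σ₀, σ₁ > 0 and
|σ̂_z − σ_z| ≤ e_z with 0 ≤ e_z ≤ σ_z/2 for z ∈ {0,1}, then
|σ̂₁/(σ̂₀+σ̂₁) − σ₁/(σ₀+σ₁)| ≤ 2(σ₁e₀ + σ₀e₁)/(σ₀+σ₁)². -/
theorem stmt11 (σ0 σ1 σh0 σh1 e0 e1 : ℝ) (h0 : 0 < σ0) (h1 : 0 < σ1)
    (he0 : |σh0 - σ0| ≤ e0) (he1 : |σh1 - σ1| ≤ e1)
    (he0' : 0 ≤ e0) (he0'' : e0 ≤ σ0 / 2)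
    (he1' : 0 ≤ e1) (he1'' : e1 ≤ σ1 / 2) :
    |σh1 / (σh0 + σh1) - σ1 / (σ0 + σ1)|
      ≤ 2 * (σ1 * e0 + σ0 * e1) / (σ0 + σ1)^2 := by
  have hS : 0 < σ0 + σ1 := add_pos h0 h1
  obtain ⟨l0, u0⟩ := abs_le.mp he0
  obtain ⟨l1, u1⟩ := abs_le.mp he1
  have hSh : (σ0 + σ1) / 2 ≤ σh0 + σh1 := by linarith
  have hSh' : 0 < σh0 + σh1 := by linarith
  have hdiff : σh1 / (σh0 + σh1) - σ1 / (σ0 + σ1)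
      = (σ0 * (σh1 - σ1) - σ1 * (σh0 - σ0)) / ((σh0 + σh1) * (σ0 + σ1)) := by
    rw [div_sub_div _ _ hSh'.ne' hS.ne']
    ring
  have hnum : |σ0 * (σh1 - σ1) - σ1 * (σh0 - σ0)| ≤ σ1 * e0 + σ0 * e1 := by
    have a0 := mul_le_mul_of_nonneg_left l0 h1.le
    have b0 := mul_le_mul_of_nonneg_left u0 h1.le
    have a1 := mul_le_mul_of_nonneg_left l1 h0.le
    have b1 := mul_le_mul_of_nonneg_left u1 h0.le
    exact abs_le.mpr ⟨by linarith, by linarith⟩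
  rw [hdiff, abs_div, abs_of_pos (mul_pos hSh' hS)]
  calc |σ0 * (σh1 - σ1) - σ1 * (σh0 - σ0)| / ((σh0 + σh1) * (σ0 + σ1))
      ≤ (σ1 * e0 + σ0 * e1) / ((σ0 + σ1) / 2 * (σ0 + σ1)) := by gcongr
    _ = 2 * (σ1 * e0 + σ0 * e1) / (σ0 + σ1)^2 := by field_simp
end

section
/- Let X be a real random variable and let A, B > 0 be constants such that P(|X| ≥ ε) ≤ 2·exp(−A(ε−B)²) for every ε > B. Then E[X²] ≤ 2B² + (π+2)/A, where π denotes the circle constant. -/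
open MeasureTheory

theorem integral_Ioi_mul_exp_neg_mul_sq {A : ℝ} (hA : 0 < A) :
    ∫ s in Set.Ioi (0 : ℝ), s * Real.exp (-A * s ^ 2) = 1 / (2 * A) := by
  have h := integral_rpow_mul_exp_neg_mul_rpow (p := 2) (q := 1) (b := A)
    (by norm_num) (by norm_num) hA
  norm_num [Real.rpow_neg_one] at h
  simp only [neg_mul, h]
  field_simp

theorem lintegral_Ioi_shifted_gaussian_mul_id {A B : ℝ} (hA : 0 < A) (hB : 0 ≤ B) :
    ∫⁻ t in Set.Ioi B, ENNReal.ofReal (2 * Real.exp (-A * (t - B) ^ 2)) * ENNReal.ofReal t =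
      ENNReal.ofReal (1 / A + B * √(Real.pi / A)) := by
  have hshift := (measurePreserving_sub_right (volume : Measure ℝ) B).setLIntegral_comp_preimage_emb
    (measurableEmbedding_subRight B)
    (fun s ↦ ENNReal.ofReal (2 * Real.exp (-A * s ^ 2)) * ENNReal.ofReal (s + B)) (Set.Ioi 0)
  simp only [Set.preimage_sub_const_Ioi, zero_add, sub_add_cancel] at hshift
  have hlin := (integrable_mul_exp_neg_mul_sq hA).integrableOn (s := Set.Ioi 0)
  have hexp := (integrable_exp_neg_mul_sq hA).integrableOn (s := Set.Ioi 0)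
  have hsplit : ∀ s : ℝ, 2 * Real.exp (-A * s ^ 2) * (s + B) =
      2 * (s * Real.exp (-A * s ^ 2)) + 2 * B * Real.exp (-A * s ^ 2) := fun s ↦ by ring
  rw [hshift]
  simp only [← ENNReal.ofReal_mul (mul_nonneg zero_le_two (Real.exp_pos _).le), hsplit]
  rw [← ofReal_integral_eq_lintegral_ofReal ((hlin.const_mul 2).fun_add (hexp.const_mul (2 * B))),
    integral_add (hlin.const_mul 2) (hexp.const_mul (2 * B)), integral_const_mul,
    integral_const_mul, integral_Ioi_mul_exp_neg_mul_sq hA, integral_gaussian_Ioi]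
  · congr 1
    field_simp
  · filter_upwards [self_mem_ae_restrict measurableSet_Ioi] with s hs
    have : 0 < s := hs
    simp only [Pi.zero_apply]
    positivity

theorem lintegral_Ioc_ofReal_id {B : ℝ} (hB : 0 ≤ B) :
    ∫⁻ t in Set.Ioc 0 B, ENNReal.ofReal t = ENNReal.ofReal (B ^ 2 / 2) := by
  rw [← ofReal_integral_eq_lintegral_ofReal, ← intervalIntegral.integral_of_le hB, integral_id]
  · simp
  · exact (continuous_id.integrableOn_Icc).mono_set Set.Ioc_subset_Icc_self
  · filter_upwards [self_mem_ae_restrict measurableSet_Ioc] with t ht using ht.1.le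

/-- The second moment bound for a nonnegative measurable random variable. -/
theorem lintegral_sq_le_of_tail_le {Ω : Type*} [MeasurableSpace Ω]
    (P : Measure Ω) [IsProbabilityMeasure P] {Y : Ω → ℝ} (hY : Measurable Y) (hY0 : 0 ≤ Y)
    {A B : ℝ} (hA : 0 < A) (hB : 0 ≤ B)
    (htail : ∀ ε : ℝ, B < ε →
      P {ω | ε ≤ Y ω} ≤ ENNReal.ofReal (2 * Real.exp (-A * (ε - B) ^ 2))) :
    ∫⁻ ω, ENNReal.ofReal (Y ω ^ 2) ∂P ≤ ENNReal.ofReal (2 * B ^ 2 + (Real.pi + 2) / A) := by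
  have hcake := lintegral_rpow_eq_lintegral_meas_le_mul P (ae_of_all _ hY0) hY.aemeasurable
    (two_pos : (0 : ℝ) < 2)
  norm_num at hcake
  rw [hcake, ← Set.Ioc_union_Ioi_eq_Ioi hB,
    lintegral_union measurableSet_Ioi (Set.Ioc_disjoint_Ioi le_rfl)]
  calc
    _ ≤ 2 * (ENNReal.ofReal (B ^ 2 / 2) + ENNReal.ofReal (1 / A + B * √(Real.pi / A))) := by
      rw [← lintegral_Ioc_ofReal_id hB, ← lintegral_Ioi_shifted_gaussian_mul_id hA hB]
      gcongr 2 * (?_ + ?_)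
      · exact lintegral_mono fun t ↦ mul_le_of_le_one_left' prob_le_one
      · exact setLIntegral_mono' measurableSet_Ioi fun t ht ↦ by gcongr; exact htail t ht
    _ = ENNReal.ofReal (2 * (B ^ 2 / 2 + (1 / A + B * √(Real.pi / A)))) := by
      rw [ENNReal.ofReal_mul zero_le_two, ENNReal.ofReal_add (p := B ^ 2 / 2) (by positivity) (by positivity),
        ENNReal.ofReal_ofNat]
    _ ≤ _ := by
      apply ENNReal.ofReal_le_ofReal
      have hsq := Real.sq_sqrt (show 0 ≤ Real.pi / A by positivity)
      rw [add_div, show 2 / A = 2 * (1 / A) by ring]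
      nlinarith [sq_nonneg (B - √(Real.pi / A))]

/-- Exponential tail bound to mean-squared-error bound: if
P(|X| ≥ ε) ≤ 2 exp(−A(ε−B)²) for every ε > B, then E[X²] ≤ 2B² + (π+2)/A. -/
theorem stmt12 {Ω : Type*} [m0 : MeasurableSpace Ω]
    (P : Measure Ω) [IsProbabilityMeasure P]
    (X : Ω → ℝ) (A B : ℝ) (hA : 0 < A) (hB : 0 < B)
    (htail : ∀ ε : ℝ, B < ε →
      P {ω | ε ≤ |X ω|} ≤ ENNReal.ofReal (2 * Real.exp (-A * (ε - B)^2))) :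
    ∫⁻ ω, ENNReal.ofReal ((X ω)^2) ∂P ≤ ENNReal.ofReal (2 * B^2 + (Real.pi + 2) / A) := by
  -- `X` need not be measurable: pass to a measurable minorant of `X ^ 2` with the same integral.
  obtain ⟨g, hg, hgX, hgint⟩ := exists_measurable_le_lintegral_eq P
    fun ω ↦ ENNReal.ofReal (X ω ^ 2)
  have hsqrt : ∀ ω, √(g ω).toReal ≤ |X ω| := fun ω ↦ by
    rw [← Real.sqrt_sq_eq_abs]
    exact Real.sqrt_le_sqrt (ENNReal.toReal_le_of_le_ofReal (sq_nonneg _) (hgX ω))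
  have hgsq : ∀ ω, g ω = ENNReal.ofReal (√(g ω).toReal ^ 2) := fun ω ↦ by
    rw [Real.sq_sqrt ENNReal.toReal_nonneg,
      ENNReal.ofReal_toReal ((hgX ω).trans_lt ENNReal.ofReal_lt_top).ne]
  rw [hgint, lintegral_congr hgsq]
  exact lintegral_sq_le_of_tail_le P hg.ennreal_toReal.sqrt (fun ω ↦ Real.sqrt_nonneg _) hA hB.le
    fun ε hε ↦ (measure_mono fun ω hω ↦ le_trans hω (hsqrt ω)).trans (htail ε hε)
end
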